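/- (Convertible bond price formula verification.) Let σ_S > 0, ρ ∈ ℝ with |ρ| < 1, T₀ ∈ ℝ, let Σ_p : ℝ → ℝ be continuous, and let r : ℝ × (0,∞) → ℝ be an arbitrary function. For t < T₀ set σ(t)² = ∫_{t}^{T₀} [σ_S² + 2ρσ_SΣ_p(u) + Σ_p(u)²] du (which is positive since |ρ| < 1 and σ_S > 0) and σ(t) = √(σ(t)²). Define, for S, p > 0 and t < T₀, V(S, p, t) = p + S·N(d̃₁) − p·N(d̃₂), where d̃₁ = (ln(S/p) + σ(t)²/2)/σ(t) and d̃₂ = d̃₁ − σ(t). Then V satisfies ∂V/∂t + (1/2)[σ_S²S² ∂²V/∂S² − 2ρσ_SΣ_p(t) S p ∂²V/∂S∂p + Σ_p(t)²p² ∂²V/∂p²] + r(t,p)·S ∂V/∂S + r(t,p)·p ∂V/∂p − r(t,p)·V = 0 at every point (S, p, t) with S, p > 0 and t < T₀. -/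

import Mathlib

/-- The standard normal cumulative distribution function
`N(x) = (2π)^{-1/2} ∫_{-∞}^{x} e^{-u²/2} du`. -/
noncomputable def stdNormalCDF (x : ℝ) : ℝ :=
  (Real.sqrt (2 * Real.pi))⁻¹ * ∫ u in Set.Iic x, Real.exp (-u ^ 2 / 2)

/-!
Write `B(S, p, v) = p + S N(d₁) - p N(d₂)`, so that `V(S, p, t) = B(S, p, v(t))` with `v = σ²`.
The identity `S N'(d₁) = p N'(d₂)` cancels every term in which `d₁` itself is differentiated, so
`∂B/∂S = N(d₁)` and `∂B/∂p = 1 - N(d₂)`. Hence `S ∂B/∂S + p ∂B/∂p = B`, which removes the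
interest rate from the equation. With `Γ = p N'(d₂) / √v`, the scaled second derivatives
`S² ∂²B/∂S²`, `-S p ∂²B/∂S∂p` and `p² ∂²B/∂p²` all equal `Γ`, and `∂B/∂v = Γ / 2`; so the
second-order part is `κ Γ / 2` with `κ = σ_S² + 2 ρ σ_S Σ_p + Σ_p²`, and it is cancelled by
`∂V/∂t = v' Γ / 2 = -κ Γ / 2`.
-/

open Filter MeasureTheory ProbabilityTheory Set Topology

namespace ConvertibleBond

theorem hasDerivAt_integral_Iic {E : Type*} [NormedAddCommGroup E] [NormedSpace ℝ E]
    [CompleteSpace E] {f : ℝ → E} {x : ℝ} (hf : Integrable f) (hx : ContinuousAt f x) :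
    HasDerivAt (fun y => ∫ u in Iic y, f u) (f x) x := by
  have split_integral : (fun y => ∫ u in Iic y, f u) =
      fun y => (∫ u in Iic x, f u) + ∫ u in x..y, f u := by
    funext y
    rw [← intervalIntegral.integral_Iic_sub_Iic hf.integrableOn hf.integrableOn,
      add_sub_cancel]
  rw [split_integral]
  exact (intervalIntegral.integral_hasDerivAt_right hf.intervalIntegrable
    hf.aestronglyMeasurable.stronglyMeasurableAtFilter hx).const_add _

theorem sq_add_two_mul_mul_add_sq_pos {a ρ : ℝ} (ha : a ≠ 0) (hρ : |ρ| < 1) (b : ℝ) :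
    0 < a ^ 2 + 2 * ρ * a * b + b ^ 2 := by
  have hρ_sq : 0 < 1 - ρ ^ 2 := sub_pos.2 ((sq_lt_one_iff_abs_lt_one ρ).2 hρ)
  calc
    0 < (1 - ρ ^ 2) * a ^ 2 + (b + ρ * a) ^ 2 := by positivity
    _ = a ^ 2 + 2 * ρ * a * b + b ^ 2 := by ring

theorem gaussianPDFReal_zero_one (x : ℝ) :
    gaussianPDFReal 0 1 x = (√(2 * Real.pi))⁻¹ * Real.exp (-x ^ 2 / 2) := by
  simp [gaussianPDFReal]

theorem gaussianPDFReal_zero_one_sub (x w : ℝ) :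
    gaussianPDFReal 0 1 (x - w) = gaussianPDFReal 0 1 x * Real.exp (x * w - w ^ 2 / 2) := by
  simp only [gaussianPDFReal_zero_one, mul_assoc, ← Real.exp_add]
  ring_nf

theorem stdNormalCDF_eq_integral_gaussianPDFReal (x : ℝ) :
    stdNormalCDF x = ∫ u in Iic x, gaussianPDFReal 0 1 u := by
  simp only [stdNormalCDF, gaussianPDFReal_zero_one, integral_const_mul]

theorem hasDerivAt_stdNormalCDF (x : ℝ) :
    HasDerivAt stdNormalCDF (gaussianPDFReal 0 1 x) x := by
  have pdf_continuous : Continuous (gaussianPDFReal 0 1) := by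
    unfold gaussianPDFReal
    fun_prop
  rw [funext stdNormalCDF_eq_integral_gaussianPDFReal]
  exact hasDerivAt_integral_Iic (integrable_gaussianPDFReal 0 1) pdf_continuous.continuousAt

/-- The coefficient `d̃₁` of the price formula, with the total variance `v = σ(t)²` as an
independent variable. -/
noncomputable def d₁ (S p v : ℝ) : ℝ := (Real.log (S / p) + v / 2) / √v

/-- The coefficient `d̃₂ = d̃₁ - σ(t)` of the price formula, with the total variance `v = σ(t)²` as
an independent variable. -/
noncomputable def d₂ (S p v : ℝ) : ℝ := d₁ S p v - √v

/-- The convertible bond price at stock price `S` and bond price `p`, with the total variance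
`v = σ(t)²` up to maturity in place of the time `t`. -/
noncomputable def price (S p v : ℝ) : ℝ :=
  p + S * stdNormalCDF (d₁ S p v) - p * stdNormalCDF (d₂ S p v)

/-- The common value `Γ` of `S² ∂²B/∂S²`, `-S p ∂²B/∂S∂p` and `p² ∂²B/∂p²`, where `B` is
`ConvertibleBond.price`. -/
noncomputable def scaledGamma (S p v : ℝ) : ℝ := p * gaussianPDFReal 0 1 (d₂ S p v) / √v

variable {S p v : ℝ}

theorem mul_gaussianPDFReal_d₁ (hS : 0 < S) (hp : 0 < p) (hv : 0 < v) :
    S * gaussianPDFReal 0 1 (d₁ S p v) = p * gaussianPDFReal 0 1 (d₂ S p v) := by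
  have exponent_eq : d₁ S p v * √v - √v ^ 2 / 2 = Real.log (S / p) := by
    rw [d₁, div_mul_cancel₀ _ (Real.sqrt_pos.2 hv).ne', Real.sq_sqrt hv.le, add_sub_cancel_right]
  rw [d₂, gaussianPDFReal_zero_one_sub, exponent_eq, Real.exp_log (div_pos hS hp)]
  field_simp

theorem hasDerivAt_d₁_stock (hS : S ≠ 0) (hp : p ≠ 0) :
    HasDerivAt (fun s => d₁ s p v) (1 / (S * √v)) S := by
  refine (((((hasDerivAt_id' S).div_const p).log (div_ne_zero hS hp)).add_const
    (v / 2)).div_const √v).congr_deriv ?_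
  field_simp

theorem hasDerivAt_d₁_bond (hS : S ≠ 0) (hp : p ≠ 0) :
    HasDerivAt (fun q => d₁ S q v) (-1 / (p * √v)) p := by
  refine ((((((hasDerivAt_id' p).fun_inv hp).const_mul S).log
    (div_ne_zero hS hp)).add_const (v / 2)).div_const √v).congr_deriv ?_
  field_simp

theorem differentiableAt_d₁_variance (hv : 0 < v) :
    DifferentiableAt ℝ (fun u => d₁ S p u) v := by
  unfold d₁
  fun_prop (disch := positivity)

theorem hasDerivAt_stdNormalCDF_d₁_stock (hS : 0 < S) (hp : 0 < p) (hv : 0 < v) :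
    HasDerivAt (fun s => stdNormalCDF (d₁ s p v)) (scaledGamma S p v / S ^ 2) S := by
  refine ((hasDerivAt_stdNormalCDF _).comp S
    (hasDerivAt_d₁_stock hS.ne' hp.ne')).congr_deriv ?_
  rw [scaledGamma, ← mul_gaussianPDFReal_d₁ hS hp hv]
  field_simp

theorem hasDerivAt_stdNormalCDF_d₂_stock (hS : S ≠ 0) (hp : p ≠ 0) :
    HasDerivAt (fun s => stdNormalCDF (d₂ s p v)) (scaledGamma S p v / (S * p)) S := by
  refine ((hasDerivAt_stdNormalCDF _).comp S
    ((hasDerivAt_d₁_stock hS hp).sub_const √v)).congr_deriv ?_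
  rw [scaledGamma, d₂]
  field_simp

theorem hasDerivAt_stdNormalCDF_d₁_bond (hS : 0 < S) (hp : 0 < p) (hv : 0 < v) :
    HasDerivAt (fun q => stdNormalCDF (d₁ S q v)) (-scaledGamma S p v / (S * p)) p := by
  refine ((hasDerivAt_stdNormalCDF _).comp p
    (hasDerivAt_d₁_bond hS.ne' hp.ne')).congr_deriv ?_
  rw [scaledGamma, ← mul_gaussianPDFReal_d₁ hS hp hv]
  field_simp

theorem hasDerivAt_stdNormalCDF_d₂_bond (hS : S ≠ 0) (hp : p ≠ 0) :
    HasDerivAt (fun q => stdNormalCDF (d₂ S q v)) (-scaledGamma S p v / p ^ 2) p := by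
  refine ((hasDerivAt_stdNormalCDF _).comp p
    ((hasDerivAt_d₁_bond hS hp).sub_const √v)).congr_deriv ?_
  rw [scaledGamma, d₂]
  field_simp

theorem hasDerivAt_price_stock (hS : 0 < S) (hp : 0 < p) (hv : 0 < v) :
    HasDerivAt (fun s => price s p v) (stdNormalCDF (d₁ S p v)) S := by
  refine ((((hasDerivAt_id' S).fun_mul (hasDerivAt_stdNormalCDF_d₁_stock hS hp hv)).const_add
    p).fun_sub ((hasDerivAt_stdNormalCDF_d₂_stock hS.ne' hp.ne').const_mul p)).congr_deriv ?_
  field_simp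
  ring

theorem hasDerivAt_price_bond (hS : 0 < S) (hp : 0 < p) (hv : 0 < v) :
    HasDerivAt (fun q => price S q v) (1 - stdNormalCDF (d₂ S p v)) p := by
  refine (((hasDerivAt_id' p).fun_add
    ((hasDerivAt_stdNormalCDF_d₁_bond hS hp hv).const_mul S)).fun_sub
    ((hasDerivAt_id' p).fun_mul
      (hasDerivAt_stdNormalCDF_d₂_bond hS.ne' hp.ne'))).congr_deriv ?_
  field_simp
  ring

theorem hasDerivAt_price_variance (hS : 0 < S) (hp : 0 < p) (hv : 0 < v) :
    HasDerivAt (fun u => price S p u) (scaledGamma S p v / 2) v := by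
  have d₁_deriv := (differentiableAt_d₁_variance (S := S) (p := p) hv).hasDerivAt
  have d₂_deriv := d₁_deriv.fun_sub (Real.hasDerivAt_sqrt hv.ne')
  refine (((((hasDerivAt_stdNormalCDF _).comp v d₁_deriv).const_mul S).const_add p).fun_sub
    (((hasDerivAt_stdNormalCDF _).comp v d₂_deriv).const_mul p)).congr_deriv ?_
  rw [← d₂, scaledGamma]
  linear_combination deriv (fun u => d₁ S p u) v * mul_gaussianPDFReal_d₁ hS hp hv

theorem price_eq_stock_mul_add_bond_mul :
    price S p v =
      S * stdNormalCDF (d₁ S p v) + p * (1 - stdNormalCDF (d₂ S p v)) := by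
  rw [price]
  ring

theorem deriv_deriv_price_stock (hS : 0 < S) (hp : 0 < p) (hv : 0 < v) :
    deriv (deriv fun s => price s p v) S = scaledGamma S p v / S ^ 2 := by
  have deriv_price : deriv (fun s => price s p v) =ᶠ[𝓝 S] fun s => stdNormalCDF (d₁ s p v) := by
    filter_upwards [lt_mem_nhds hS] with s hs using (hasDerivAt_price_stock hs hp hv).deriv
  rw [deriv_price.deriv_eq, (hasDerivAt_stdNormalCDF_d₁_stock hS hp hv).deriv]

theorem deriv_deriv_price_bond (hS : 0 < S) (hp : 0 < p) (hv : 0 < v) :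
    deriv (deriv fun q => price S q v) p = scaledGamma S p v / p ^ 2 := by
  have deriv_price :
      deriv (fun q => price S q v) =ᶠ[𝓝 p] fun q => 1 - stdNormalCDF (d₂ S q v) := by
    filter_upwards [lt_mem_nhds hp] with q hq using (hasDerivAt_price_bond hS hq hv).deriv
  rw [deriv_price.deriv_eq,
    ((hasDerivAt_stdNormalCDF_d₂_bond hS.ne' hp.ne').const_sub 1).deriv, neg_div, neg_neg]

theorem deriv_stock_deriv_bond_price (hS : 0 < S) (hp : 0 < p) (hv : 0 < v) :
    deriv (fun s => deriv (fun q => price s q v) p) S = -(scaledGamma S p v / (S * p)) := by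
  have deriv_price : (fun s => deriv (fun q => price s q v) p) =ᶠ[𝓝 S]
      fun s => 1 - stdNormalCDF (d₂ s p v) := by
    filter_upwards [lt_mem_nhds hS] with s hs using (hasDerivAt_price_bond hs hp hv).deriv
  rw [deriv_price.deriv_eq,
    ((hasDerivAt_stdNormalCDF_d₂_stock hS.ne' hp.ne').const_sub 1).deriv]

/-- The total variance `σ(t)²` of the ratio of stock and bond price between `t` and `T₀`. -/
noncomputable def totalVariance (σS ρ : ℝ) (Sigp : ℝ → ℝ) (T₀ t : ℝ) : ℝ :=
  ∫ u in t..T₀, (σS ^ 2 + 2 * ρ * σS * Sigp u + Sigp u ^ 2)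

theorem totalVariance_pos {σS ρ T₀ t : ℝ} (hσS : σS ≠ 0) (hρ : |ρ| < 1) {Sigp : ℝ → ℝ}
    (hSigp : Continuous Sigp) (ht : t < T₀) : 0 < totalVariance σS ρ Sigp T₀ t :=
  intervalIntegral.intervalIntegral_pos_of_pos
    (Continuous.intervalIntegrable (by fun_prop) _ _)
    (fun u => sq_add_two_mul_mul_add_sq_pos hσS hρ (Sigp u)) ht

theorem hasDerivAt_totalVariance (σS ρ T₀ t : ℝ) {Sigp : ℝ → ℝ} (hSigp : Continuous Sigp) :
    HasDerivAt (totalVariance σS ρ Sigp T₀)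
      (-(σS ^ 2 + 2 * ρ * σS * Sigp t + Sigp t ^ 2)) t := by
  have integrand_continuous :
      Continuous fun u => σS ^ 2 + 2 * ρ * σS * Sigp u + Sigp u ^ 2 := by fun_prop
  exact intervalIntegral.integral_hasDerivAt_left (integrand_continuous.intervalIntegrable _ _)
    (integrand_continuous.stronglyMeasurableAtFilter _ _) integrand_continuous.continuousAt

end ConvertibleBond

open ConvertibleBond

theorem convertible_bond_formula_verification_general {S p t : ℝ} (hS : 0 < S) (hp : 0 < p)
    {v : ℝ → ℝ} (hvt : 0 < v t) {σS ρ Sigp : ℝ}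
    (hv : HasDerivAt v (-(σS ^ 2 + 2 * ρ * σS * Sigp + Sigp ^ 2)) t) (r : ℝ)
    {V : ℝ → ℝ → ℝ → ℝ}
    (hV : ∀ᶠ τ in 𝓝 t, ∀ s q, 0 < s → 0 < q → V s q τ = price s q (v τ)) :
    deriv (fun τ => V S p τ) t
        + (1 / 2) * (σS ^ 2 * S ^ 2 * deriv (deriv (fun s => V s p t)) S
            - 2 * ρ * σS * Sigp * S * p * deriv (fun s => deriv (fun q => V s q t) p) S
            + Sigp ^ 2 * p ^ 2 * deriv (deriv (fun q => V S q t)) p)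
        + r * S * deriv (fun s => V s p t) S
        + r * p * deriv (fun q => V S q t) p
        - r * V S p t = 0 := by
  have price_at_t : ∀ s q, 0 < s → 0 < q → V s q t = price s q (v t) := hV.self_of_nhds
  have time_eq : (fun τ => V S p τ) =ᶠ[𝓝 t] fun τ => price S p (v τ) :=
    hV.mono fun τ h => h S p hS hp
  have stock_eq : (fun s => V s p t) =ᶠ[𝓝 S] fun s => price s p (v t) :=
    (lt_mem_nhds hS).mono fun s hs => price_at_t s p hs hp
  have bond_eq : ∀ s, 0 < s → (fun q => V s q t) =ᶠ[𝓝 p] fun q => price s q (v t) :=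
    fun s hs => (lt_mem_nhds hp).mono fun q hq => price_at_t s q hs hq
  have bond_deriv_eq : (fun s => deriv (fun q => V s q t) p) =ᶠ[𝓝 S]
      fun s => deriv (fun q => price s q (v t)) p :=
    (lt_mem_nhds hS).mono fun s hs => (bond_eq s hs).deriv_eq
  have V_time : deriv (fun τ => V S p τ) t =
      scaledGamma S p (v t) / 2 * -(σS ^ 2 + 2 * ρ * σS * Sigp + Sigp ^ 2) :=
    time_eq.deriv_eq.trans ((hasDerivAt_price_variance hS hp hvt).comp t hv).deriv
  have V_stock : deriv (fun s => V s p t) S = stdNormalCDF (d₁ S p (v t)) :=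
    stock_eq.deriv_eq.trans (hasDerivAt_price_stock hS hp hvt).deriv
  have V_bond : deriv (fun q => V S q t) p = 1 - stdNormalCDF (d₂ S p (v t)) :=
    (bond_eq S hS).deriv_eq.trans (hasDerivAt_price_bond hS hp hvt).deriv
  rw [V_time, V_stock, V_bond, stock_eq.deriv.deriv_eq, deriv_deriv_price_stock hS hp hvt,
    bond_deriv_eq.deriv_eq, deriv_stock_deriv_bond_price hS hp hvt,
    (bond_eq S hS).deriv.deriv_eq, deriv_deriv_price_bond hS hp hvt,
    price_at_t S p hS hp, price_eq_stock_mul_add_bond_mul]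
  field_simp
  ring

/-- Convertible bond price formula verification. -/
theorem convertible_bond_formula_verification (σS ρ T₀ : ℝ)
    (hσS : 0 < σS) (hρ : |ρ| < 1)
    (Sigp : ℝ → ℝ) (hSigp : Continuous Sigp)
    (r : ℝ → ℝ → ℝ)
    (s2 : ℝ → ℝ)
    (hs2 : ∀ t, s2 t = ∫ u in t..T₀, (σS ^ 2 + 2 * ρ * σS * Sigp u + (Sigp u) ^ 2))
    (V : ℝ → ℝ → ℝ → ℝ)
    (hV : ∀ S p t : ℝ, 0 < S → 0 < p → t < T₀ →
      V S p t = p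
          + S * stdNormalCDF
              ((Real.log (S / p) + s2 t / 2) / Real.sqrt (s2 t))
          - p * stdNormalCDF
              ((Real.log (S / p) + s2 t / 2) / Real.sqrt (s2 t)
                - Real.sqrt (s2 t))) :
    ∀ S p t : ℝ, 0 < S → 0 < p → t < T₀ →
      deriv (fun τ => V S p τ) t
          + (1 / 2) * (σS ^ 2 * S ^ 2 * deriv (deriv (fun s => V s p t)) S
              - 2 * ρ * σS * Sigp t * S * p
                  * deriv (fun s => deriv (fun q => V s q t) p) S
              + (Sigp t) ^ 2 * p ^ 2 * deriv (deriv (fun q => V S q t)) p)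
          + r t p * S * deriv (fun s => V s p t) S
          + r t p * p * deriv (fun q => V S q t) p
          - r t p * V S p t = 0 := by
  intro S p t hS hp ht
  obtain rfl : s2 = totalVariance σS ρ Sigp T₀ := funext hs2
  exact convertible_bond_formula_verification_general hS hp
    (totalVariance_pos hσS.ne' hρ hSigp ht) (hasDerivAt_totalVariance σS ρ T₀ t hSigp) (r t p)
    ((gt_mem_nhds ht).mono fun τ hτ s q hs hq => hV s q τ hs hq hτ)
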